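/- Fix constants R*, ε, η, B > 0. There exists n₀ = n₀(ε, η, R*, B) such that for every n ≥ n₀ there exist a rate R ≤ R* + ε, an encoder f : ℝⁿ × 𝕊₊ⁿ × [0,1] → {1,…,⌊2^{nR}⌋}, a decoder g : {1,…,⌊2^{nR}⌋} × [0,1] → ℝⁿ, and a random variable S uniform on [0,1] such that for every positive semidefinite Σ ∈ ℝ^{n×n} with tr(Σ) = n and eigenvalues λ, setting Ŵ = g(f(W, Σ, S), S) for W ~ N(0, Iₙ) independent of S: Pr_S[ E_W[(1/n) d_Σ(W, Ŵ)] ≤ 𝐃_rc(λ, R*) + η ] ≥ 1 − exp(−n^B). -/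

import Mathlib

open MeasureTheory Matrix Real

/-- Standard Gaussian measure `N(0, I_n)` on `ℝⁿ`. -/
noncomputable def stdGaussian (n : ℕ) : Measure (Fin n → ℝ) :=
  Measure.pi fun _ => ProbabilityTheory.gaussianReal 0 1

/-- Distortion `d_Σ(w, v) = (w - v)ᵀ Σ (w - v)`. -/
noncomputable def dSig {n : ℕ} (Sig : Matrix (Fin n) (Fin n) ℝ) (w v : Fin n → ℝ) : ℝ :=
  (w - v) ⬝ᵥ Sig.mulVec (w - v)

/-- Random-coding distortion `D_rc(λ, T) = (1/n) Σᵢ λᵢ/(1 + λᵢ T)`. -/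
noncomputable def Drc {n : ℕ} (lam : Fin n → ℝ) (T : ℝ) : ℝ :=
  (1 / (n : ℝ)) * ∑ i, lam i / (1 + lam i * T)

/-- Random-coding rate `R_rc(λ, T) = (1/(2n)) Σᵢ log₂(1 + λᵢ T)`. -/
noncomputable def Rrc {n : ℕ} (lam : Fin n → ℝ) (T : ℝ) : ℝ :=
  (1 / (2 * (n : ℝ))) * ∑ i, Real.logb 2 (1 + lam i * T)

/-- `T_rc(λ, R)`: the unique `T > 0` with `R_rc(λ, T) = R`. -/
noncomputable def Trc {n : ℕ} (lam : Fin n → ℝ) (R : ℝ) : ℝ :=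
  Classical.epsilon fun T => 0 < T ∧ Rrc lam T = R

/-- `𝐃_rc(λ, R) = D_rc(λ, T_rc(λ, R))`. -/
noncomputable def DDrc {n : ℕ} (lam : Fin n → ℝ) (R : ℝ) : ℝ :=
  Drc lam (Trc lam R)

/-!
The code is an i.i.d. Gaussian codebook, drawn from the shared randomness, with every word scaled to
each variance of a finite grid in `(0, 1]`, together with the zero word. The encoder picks the word
of least distortion. It therefore need not know which variance suits `Σ`, and since `N(0, I)` is
invariant under rotations, `Σ` may be taken diagonal with entries `λᵢ`.

Let `uᵢ = λᵢ T / (1 + λᵢ T)` with `R_rc(λ, T) = R*`, and let `s` be a grid point just above the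
matched variance `∑ uᵢ² / ∑ uᵢ`. The test channel `wᵢ ↦ uᵢ wᵢ + √s √(1 - uᵢ) xᵢ` has mean distortion
about `n 𝐃_rc(λ, R*)` and mean information density at most `n R* log 2`. Both are sums of
independent quadratic forms, so they concentrate by Chebyshev's inequality, with bounds which do not
depend on `λ`: `λᵢ (1 - uᵢ) ≤ 1 / T`, and `T` is bounded below in terms of `R*`. A change of measure
from the codebook to the channel then shows that, for a typical source word, a single codeword
succeeds with probability at least `exp (-n (R* log 2 + κ)) / 2`. Hence about
`exp (n (R* log 2 + 2κ))` codewords all fail with probability doubly exponentially small in `n`. On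
the few source words left uncovered the zero word bounds the loss by a fourth moment.
-/

section

open ProbabilityTheory hiding stdGaussian

section Measure

variable {α β ι : Type*} [MeasurableSpace α] [MeasurableSpace β] [Fintype ι]

lemma lintegral_pi_prod {Ω : ι → Type*} [∀ i, MeasurableSpace (Ω i)] (μ : ∀ i, Measure (Ω i))
    [∀ i, IsProbabilityMeasure (μ i)] {f : ∀ i, Ω i → ENNReal} (hf : ∀ i, Measurable (f i)) :
    ∫⁻ x, ∏ i, f i (x i) ∂Measure.pi μ = ∏ i, ∫⁻ x, f i x ∂μ i := by
  rw [lintegral_prod_eq_prod_lintegral_of_indepFun Finset.univ (fun i (x : ∀ i, Ω i) => f i (x i))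
    (iIndepFun_pi fun i => (hf i).aemeasurable) fun i => (hf i).comp (measurable_pi_apply i)]
  exact Finset.prod_congr rfl fun i _ => (measurePreserving_eval μ i).lintegral_comp (hf i)

lemma pi_withDensity {Ω : ι → Type*} [∀ i, MeasurableSpace (Ω i)] (μ : ∀ i, Measure (Ω i))
    [∀ i, IsProbabilityMeasure (μ i)] {d : ∀ i, Ω i → ENNReal} (hd : ∀ i, Measurable (d i))
    [∀ i, SigmaFinite ((μ i).withDensity (d i))] :
    Measure.pi (fun i => (μ i).withDensity (d i)) =
      (Measure.pi μ).withDensity fun x => ∏ i, d i (x i) := by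
  classical
  refine Measure.pi_eq fun s hs => ?_
  have indicator_prod : (Set.univ.pi s).indicator (fun x => ∏ i, d i (x i)) =
      fun x => ∏ i, (s i).indicator (d i) (x i) := by
    ext x
    by_cases hx : x ∈ Set.univ.pi s
    · rw [Set.indicator_of_mem hx]
      exact Finset.prod_congr rfl fun i _ => (Set.indicator_of_mem (hx i trivial) _).symm
    · rw [Set.indicator_of_notMem hx]
      obtain ⟨i, hi⟩ : ∃ i, x i ∉ s i := by simpa [Set.mem_pi] using hx
      exact (Finset.prod_eq_zero (Finset.mem_univ i) (Set.indicator_of_notMem hi _)).symm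
  rw [withDensity_apply _ (.univ_pi hs), ← lintegral_indicator (.univ_pi hs), indicator_prod,
    lintegral_pi_prod μ fun i => (hd i).indicator (hs i)]
  refine Finset.prod_congr rfl fun i _ => ?_
  rw [withDensity_apply _ (hs i), lintegral_indicator (hs i)]

lemma withDensity_inter_le (μ : Measure α) {r : α → ENNReal} (hr : Measurable r) {A : Set α}
    (hA : MeasurableSet A) (c : ENNReal) :
    μ.withDensity r (A ∩ {x | r x ≤ c}) ≤ c * μ A := by
  have hAc : MeasurableSet (A ∩ {x | r x ≤ c}) := hA.inter (measurableSet_le hr measurable_const)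
  rw [withDensity_apply _ hAc]
  calc ∫⁻ x in A ∩ {x | r x ≤ c}, r x ∂μ ≤ ∫⁻ _ in A ∩ {x | r x ≤ c}, c ∂μ :=
        setLIntegral_mono' hAc fun _ hx => hx.2
    _ ≤ c * μ A := by
        rw [setLIntegral_const]
        gcongr
        exact Set.inter_subset_left

lemma integral_measureReal_prodMk_left {μ : Measure α} {ν : Measure β} [IsFiniteMeasure ν]
    {S : Set (α × β)} (hS : MeasurableSet S) :
    ∫ x, ν.real (Prod.mk x ⁻¹' S) ∂μ = (μ.prod ν).real S := by
  rw [measureReal_def, Measure.prod_apply hS]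
  exact integral_toReal (measurable_measure_prodMk_left hS).aemeasurable (by simp)

lemma measurable_measureReal_prodMk_left {ν : Measure β} [SFinite ν] {S : Set (α × β)}
    (hS : MeasurableSet S) : Measurable fun x => ν.real (Prod.mk x ⁻¹' S) :=
  (measurable_measure_prodMk_left hS).ennreal_toReal

lemma measureReal_le_section_le {μ : Measure α} {ν : Measure β} [IsFiniteMeasure μ]
    [IsFiniteMeasure ν] {S : Set (α × β)} (hS : MeasurableSet S) {c : ℝ} (hc : 0 < c) :
    μ.real {x | c ≤ ν.real (Prod.mk x ⁻¹' S)} ≤ (μ.prod ν).real S / c := by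
  rw [le_div_iff₀' hc, ← integral_measureReal_prodMk_left hS]
  exact mul_meas_ge_le_integral_of_nonneg (.of_forall fun _ => measureReal_nonneg)
    (Measure.integrable_measure_prodMk_left hS (measure_ne_top _ _)) c

lemma measureReal_prod_le_of_forall_section_le {μ : Measure α} {ν : Measure β}
    [IsFiniteMeasure μ] [IsProbabilityMeasure ν] {S : Set (α × β)} (hS : MeasurableSet S) {c : ℝ}
    (h : ∀ y, μ.real ((fun x => (x, y)) ⁻¹' S) ≤ c) : (μ.prod ν).real S ≤ c := by
  have hc : 0 ≤ c := by
    obtain ⟨y⟩ := nonempty_of_isProbabilityMeasure ν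
    exact measureReal_nonneg.trans (h y)
  refine ENNReal.toReal_le_of_le_ofReal hc ?_
  rw [Measure.prod_apply_symm hS]
  calc ∫⁻ y, μ ((fun x => (x, y)) ⁻¹' S) ∂ν ≤ ∫⁻ _, ENNReal.ofReal c ∂ν :=
        lintegral_mono fun y => (ENNReal.le_ofReal_iff_toReal_le (measure_ne_top _ _) hc).2 (h y)
    _ = ENNReal.ofReal c := by simp

lemma integral_le_add_sqrt_of_le_off {μ : Measure α} [IsProbabilityMeasure μ] {F Q : α → ℝ}
    {E : Set α} {D : ℝ} (hE : MeasurableSet E) (hQ : MemLp Q 2 μ) (hF : ∀ x, 0 ≤ F x)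
    (hD : 0 ≤ D) (hFD : ∀ x ∉ E, F x ≤ D) (hFQ : ∀ x, F x ≤ Q x) :
    ∫ x, F x ∂μ ≤ D + √((∫ x, Q x ^ 2 ∂μ) * μ.real E) := by
  have hQ0 : ∀ x, 0 ≤ Q x := fun x => (hF x).trans (hFQ x)
  have memLp_indicator : MemLp (E.indicator fun _ => (1 : ℝ)) 2 μ :=
    (memLp_const 1).indicator hE
  have integrable_mul : Integrable (fun x => Q x * E.indicator (fun _ => 1) x) μ :=
    hQ.integrable_mul memLp_indicator
  have le_majorant : ∀ x, F x ≤ D + Q x * E.indicator (fun _ => 1) x := fun x => by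
    by_cases hx : x ∈ E
    · simpa [hx] using (hFQ x).trans (le_add_of_nonneg_left hD)
    · simpa [hx] using hFD x hx
  have cauchy_schwarz :
      ∫ x, Q x * E.indicator (fun _ => 1) x ∂μ ≤ √((∫ x, Q x ^ 2 ∂μ) * μ.real E) := by
    have := integral_mul_le_Lp_mul_Lq_of_nonneg (μ := μ) Real.HolderConjugate.two_two
      (.of_forall hQ0) (.of_forall fun x => Set.indicator_nonneg (fun _ _ => zero_le_one) x)
      (by simpa using hQ) (by simpa using memLp_indicator)
    have indicator_sq : ∀ x, E.indicator (fun _ => (1 : ℝ)) x ^ 2 = E.indicator 1 x := fun x => by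
      by_cases hx : x ∈ E <;> simp [hx]
    simp only [Real.rpow_two, ← Real.sqrt_eq_rpow, indicator_sq, integral_indicator_one hE] at this
    rwa [Real.sqrt_mul (integral_nonneg fun x => sq_nonneg (Q x))]
  calc ∫ x, F x ∂μ ≤ ∫ x, (D + Q x * E.indicator (fun _ => 1) x) ∂μ :=
        integral_mono_of_nonneg (.of_forall hF) ((integrable_const D).add integrable_mul)
          (.of_forall le_majorant)
    _ = D + ∫ x, Q x * E.indicator (fun _ => 1) x ∂μ := by
        rw [integral_add (integrable_const D) integrable_mul]; simp
    _ ≤ _ := by gcongr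

lemma measureReal_pi_sum_ge_le {Ω : ι → Type*} [∀ i, MeasurableSpace (Ω i)]
    {μ : ∀ i, Measure (Ω i)} [∀ i, IsProbabilityMeasure (μ i)] {X : ∀ i, Ω i → ℝ}
    (hX : ∀ i, MemLp (X i) 2 (μ i)) {V c : ℝ} (hV : ∀ i, Var[X i; μ i] ≤ V) (hc : 0 < c) :
    (Measure.pi μ).real {ω | ∑ i, ∫ x, X i x ∂μ i + c ≤ ∑ i, X i (ω i)} ≤
      Fintype.card ι * V / c ^ 2 := by
  have memLp_eval : ∀ i, MemLp (fun ω : ∀ i, Ω i => X i (ω i)) 2 (Measure.pi μ) := fun i =>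
    (hX i).comp_measurePreserving (measurePreserving_eval μ i)
  have integral_sum : ∫ ω, (∑ i, fun ω : ∀ i, Ω i => X i (ω i)) ω ∂Measure.pi μ =
      ∑ i, ∫ x, X i x ∂μ i := by
    simp only [Finset.sum_apply]
    rw [integral_finsetSum _ fun i _ => (memLp_eval i).integrable one_le_two]
    exact Finset.sum_congr rfl fun i _ => integral_comp_eval (hX i).aestronglyMeasurable
  have variance_sum : Var[∑ i, fun ω : ∀ i, Ω i => X i (ω i); Measure.pi μ] ≤
      Fintype.card ι * V := by
    rw [variance_sum_pi hX]
    simpa using Finset.sum_le_sum fun i (_ : i ∈ Finset.univ) => hV i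
  have chebyshev :=
    meas_ge_le_variance_div_sq (memLp_finsetSum' Finset.univ fun i _ => memLp_eval i) hc
  rw [integral_sum] at chebyshev
  calc (Measure.pi μ).real {ω | ∑ i, ∫ x, X i x ∂μ i + c ≤ ∑ i, X i (ω i)}
      ≤ Var[∑ i, fun ω : ∀ i, Ω i => X i (ω i); Measure.pi μ] / c ^ 2 := by
        refine ENNReal.toReal_le_of_le_ofReal (div_nonneg (variance_nonneg _ _) (sq_nonneg c))
          ((measure_mono fun ω hω => ?_).trans chebyshev)
        simp only [Set.mem_ofPred_eq, Finset.sum_apply] at hω ⊢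
        exact le_trans (by linarith) (le_abs_self _)
    _ ≤ _ := by gcongr

lemma exists_measurable_map_restrict_Icc_eq [StandardBorelSpace α] (μ : Measure α)
    [IsProbabilityMeasure μ] :
    ∃ Z : ℝ → α, Measurable Z ∧ (volume.restrict (Set.Icc (0 : ℝ) 1)).map Z = μ := by
  have := nonempty_of_isProbabilityMeasure μ
  obtain ⟨Z, hZ, hμ⟩ := μ.exists_measurable_map_eq
  have hproj : Measurable (Set.projIcc (0 : ℝ) 1 zero_le_one) := continuous_projIcc.measurable
  refine ⟨Z ∘ Set.projIcc 0 1 zero_le_one, hZ.comp hproj, ?_⟩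
  rw [← hμ, ← Measure.map_map hZ hproj, ← unitInterval.measurePreserving_coe.map_eq,
    Measure.map_map hproj measurable_subtype_coe]
  congr 1
  convert Measure.map_id
  exact funext fun u => Set.projIcc_val zero_le_one u

end Measure

section Covering

variable {α β κ : Type*} [MeasurableSpace α] [MeasurableSpace β]

/-- The source points left uncovered by the codebook `Z`, where `(w, z) ∈ A` means that the
codeword `z` covers the source point `w`. -/
def uncovered (A : Set (α × β)) (Z : κ → β) : Set α :=
  {w | ∀ l, (w, Z l) ∉ A}

lemma measurableSet_mem_uncovered [Countable κ] {A : Set (α × β)} (hA : MeasurableSet A) :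
    MeasurableSet {z : (κ → β) × α | z.2 ∈ uncovered A z.1} := by
  have eq_iInter : {z : (κ → β) × α | z.2 ∈ uncovered A z.1} =
      ⋂ l, ((fun z : (κ → β) × α => (z.2, z.1 l)) ⁻¹' A)ᶜ := by
    ext z
    simp [uncovered]
  rw [eq_iInter]
  exact .iInter fun l => (hA.preimage (by fun_prop)).compl

lemma measurableSet_uncovered [Countable κ] {A : Set (α × β)} (hA : MeasurableSet A)
    (Z : κ → β) :
    MeasurableSet (uncovered A Z) :=
  measurable_prodMk_left (measurableSet_mem_uncovered hA)

variable [Fintype κ]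

lemma measureReal_pi_mem_uncovered {ν : Measure β} [IsProbabilityMeasure ν] {A : Set (α × β)}
    (hA : MeasurableSet A) (w : α) :
    (Measure.pi fun _ : κ => ν).real {Z | w ∈ uncovered A Z} =
      (1 - ν.real (Prod.mk w ⁻¹' A)) ^ Fintype.card κ := by
  have eq_pi : {Z : κ → β | w ∈ uncovered A Z} = Set.univ.pi fun _ => (Prod.mk w ⁻¹' A)ᶜ := by
    ext Z
    simp [uncovered]
  rw [eq_pi, measureReal_def, Measure.pi_pi, Finset.prod_const, Finset.card_univ,
    ENNReal.toReal_pow, ← measureReal_def,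
    probReal_compl_eq_one_sub (measurable_prodMk_left hA)]

lemma measureReal_pi_le_measureReal_uncovered_le {μ : Measure α} {ν : Measure β}
    [IsProbabilityMeasure μ] [IsProbabilityMeasure ν] {A : Set (α × β)} (hA : MeasurableSet A)
    {q δ : ℝ} (hδ : 0 < δ) (hq : μ.real {w | ν.real (Prod.mk w ⁻¹' A) < q} ≤ δ) :
    (Measure.pi fun _ : κ => ν).real {Z | 2 * δ ≤ μ.real (uncovered A Z)} ≤
      rexp (-(q * Fintype.card κ)) / δ := by
  set S : Set ((κ → β) × α) :=
    {z | q ≤ ν.real (Prod.mk z.2 ⁻¹' A)} ∩ {z | z.2 ∈ uncovered A z.1}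
  have measurableSet_S : MeasurableSet S :=
    (measurableSet_le measurable_const
      ((measurable_measureReal_prodMk_left hA).comp measurable_snd)).inter
      (measurableSet_mem_uncovered hA)
  have uncovered_subset : ∀ Z : κ → β,
      uncovered A Z ⊆ {w | ν.real (Prod.mk w ⁻¹' A) < q} ∪ Prod.mk Z ⁻¹' S := fun Z w hw =>
    (lt_or_ge (ν.real (Prod.mk w ⁻¹' A)) q).imp id fun h => ⟨h, hw⟩
  have prob_S : ((Measure.pi fun _ : κ => ν).prod μ).real S ≤ rexp (-(q * Fintype.card κ)) := by
    refine measureReal_prod_le_of_forall_section_le measurableSet_S fun w => ?_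
    by_cases hw : q ≤ ν.real (Prod.mk w ⁻¹' A)
    · calc (Measure.pi fun _ : κ => ν).real ((fun Z => (Z, w)) ⁻¹' S)
          ≤ (Measure.pi fun _ : κ => ν).real {Z | w ∈ uncovered A Z} :=
            measureReal_mono fun _ hZ => hZ.2
        _ = (1 - ν.real (Prod.mk w ⁻¹' A)) ^ Fintype.card κ := measureReal_pi_mem_uncovered hA w
        _ ≤ rexp (-q) ^ Fintype.card κ := by
            refine pow_le_pow_left₀ (sub_nonneg.2 measureReal_le_one) ?_ _
            linarith [add_one_le_exp (-q)]
        _ = rexp (-(q * Fintype.card κ)) := by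
            rw [← Real.exp_nat_mul]
            ring_nf
    · have : (fun Z => (Z, w)) ⁻¹' S = ∅ := Set.eq_empty_of_forall_notMem fun _ hZ => hw hZ.1
      rw [this, measureReal_empty]
      exact (exp_pos _).le
  calc (Measure.pi fun _ : κ => ν).real {Z | 2 * δ ≤ μ.real (uncovered A Z)}
      ≤ (Measure.pi fun _ : κ => ν).real {Z | δ ≤ μ.real (Prod.mk Z ⁻¹' S)} := by
        refine measureReal_mono fun Z (hZ : 2 * δ ≤ _) => ?_
        have := (measureReal_mono (μ := μ) (uncovered_subset Z)).trans (measureReal_union_le _ _)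
        exact (by linarith : δ ≤ μ.real (Prod.mk Z ⁻¹' S))
    _ ≤ ((Measure.pi fun _ : κ => ν).prod μ).real S / δ :=
        measureReal_le_section_le measurableSet_S hδ
    _ ≤ _ := by gcongr

lemma one_sub_le_measureReal_uncovered_lt {Ω : Type*} [MeasurableSpace Ω] {P : Measure Ω}
    {μ : Measure α} {ν : Measure β} [IsProbabilityMeasure P] [IsProbabilityMeasure μ]
    [IsProbabilityMeasure ν] {Z : Ω → κ → β} (hZ : MeasurePreserving Z P (Measure.pi fun _ => ν))
    {A : Set (α × β)} (hA : MeasurableSet A) {q δ : ℝ} (hδ : 0 < δ)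
    (hq : μ.real {w | ν.real (Prod.mk w ⁻¹' A) < q} ≤ δ) :
    1 - rexp (-(q * Fintype.card κ)) / δ ≤ P.real {s | μ.real (uncovered A (Z s)) < 2 * δ} := by
  have measurableSet_ge : MeasurableSet {Y : κ → β | 2 * δ ≤ μ.real (uncovered A Y)} :=
    measurableSet_le measurable_const
      (measurable_measureReal_prodMk_left (measurableSet_mem_uncovered hA))
  have eq_compl : {s | μ.real (uncovered A (Z s)) < 2 * δ} =
      (Z ⁻¹' {Y | 2 * δ ≤ μ.real (uncovered A Y)})ᶜ := by
    ext s
    simp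
  rw [eq_compl, probReal_compl_eq_one_sub (measurableSet_ge.preimage hZ.measurable),
    hZ.measureReal_preimage measurableSet_ge.nullMeasurableSet]
  linarith [measureReal_pi_le_measureReal_uncovered_le (κ := κ) hA hδ hq]

end Covering

section Gaussian

variable {n : ℕ}

instance : IsProbabilityMeasure (stdGaussian n) := by
  unfold stdGaussian
  infer_instance

lemma map_affine_gaussianReal_eq_withDensity (a : ℝ) {ρ : ℝ} (hρ : 0 < ρ) :
    (gaussianReal 0 1).map (fun x => a + ρ * x) = (gaussianReal 0 1).withDensity
      fun y => ENNReal.ofReal (rexp (-Real.log ρ + (y ^ 2 - ((y - a) / ρ) ^ 2) / 2)) := by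
  have hv : NNReal.mk (ρ ^ 2) (sq_nonneg ρ) ≠ 0 := fun h =>
    (pow_pos hρ 2).ne' (congrArg NNReal.toReal h)
  have map_eq : (gaussianReal 0 1).map (fun x => a + ρ * x) =
      gaussianReal a (NNReal.mk (ρ ^ 2) (sq_nonneg ρ)) := by
    rw [show (fun x => a + ρ * x) = (a + ·) ∘ (ρ * ·) from rfl,
      ← Measure.map_map (by fun_prop) (by fun_prop), gaussianReal_map_const_mul,
      gaussianReal_map_const_add]
    simp
  rw [map_eq, gaussianReal_of_var_ne_zero _ hv, gaussianReal_of_var_ne_zero _ one_ne_zero,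
    ← withDensity_mul _ (measurable_gaussianPDF _ _) (by fun_prop)]
  congr 1 with y
  rw [Pi.mul_apply, gaussianPDF, gaussianPDF,
    ← ENNReal.ofReal_mul (gaussianPDFReal_nonneg _ _ _)]
  congr 1
  simp only [gaussianPDFReal, NNReal.coe_mk, NNReal.coe_one, sub_zero, mul_one]
  rw [Real.sqrt_mul (by positivity), Real.sqrt_sq hρ.le, mul_assoc, ← Real.exp_add, mul_inv,
    mul_assoc, ← Real.exp_log (inv_pos.2 hρ), ← Real.exp_add, Real.log_inv]
  congr 2
  field_simp
  ring

lemma map_affine_stdGaussian_eq_withDensity (a : Fin n → ℝ) {ρ : Fin n → ℝ}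
    (hρ : ∀ i, 0 < ρ i) :
    (stdGaussian n).map (fun x i => a i + ρ i * x i) = (stdGaussian n).withDensity
      fun y => ENNReal.ofReal
        (rexp (∑ i, (-Real.log (ρ i) + (y i ^ 2 - ((y i - a i) / ρ i) ^ 2) / 2))) := by
  have isProbabilityMeasure_map : ∀ i,
      IsProbabilityMeasure ((gaussianReal 0 1).map fun x => a i + ρ i * x) := fun i =>
    Measure.isProbabilityMeasure_map (by fun_prop)
  have coord := fun i => map_affine_gaussianReal_eq_withDensity (a i) (hρ i)
  rw [stdGaussian, Measure.pi_map_pi (f := fun i x => a i + ρ i * x) fun i => by fun_prop]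
  simp only [coord] at isProbabilityMeasure_map ⊢
  rw [pi_withDensity _ fun i => by fun_prop]
  congr 1 with y
  rw [Real.exp_sum, ENNReal.ofReal_prod_of_nonneg fun i _ => (exp_pos _).le]

lemma exp_neg_mul_measureReal_affine_le (a : Fin n → ℝ) {ρ : Fin n → ℝ} (hρ : ∀ i, 0 < ρ i)
    {A : Set (Fin n → ℝ)} (hA : MeasurableSet A) (t : ℝ) :
    rexp (-t) * (stdGaussian n).real {x | (fun i => a i + ρ i * x i) ∈ A ∧
      ∑ i, (-Real.log (ρ i) + ((a i + ρ i * x i) ^ 2 - x i ^ 2) / 2) ≤ t} ≤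
      (stdGaussian n).real A := by
  set L : (Fin n → ℝ) → ENNReal := fun y => ENNReal.ofReal
    (rexp (∑ i, (-Real.log (ρ i) + (y i ^ 2 - ((y i - a i) / ρ i) ^ 2) / 2))) with hL
  have measurable_L : Measurable L := by fun_prop
  have event_eq : {x : Fin n → ℝ | (fun i => a i + ρ i * x i) ∈ A ∧
      ∑ i, (-Real.log (ρ i) + ((a i + ρ i * x i) ^ 2 - x i ^ 2) / 2) ≤ t} =
      (fun x i => a i + ρ i * x i) ⁻¹' (A ∩ {y | L y ≤ ENNReal.ofReal (rexp t)}) := by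
    ext x
    have : ∀ i, (a i + ρ i * x i - a i) / ρ i = x i := fun i => by
      rw [add_sub_cancel_left, mul_div_cancel_left₀ _ (hρ i).ne']
    simp only [hL, Set.preimage_inter, Set.mem_inter_iff, Set.mem_preimage, Set.mem_ofPred_eq,
      this, ENNReal.ofReal_le_ofReal_iff (exp_pos t).le, exp_le_exp]
  have bound : (stdGaussian n).real ((fun x i => a i + ρ i * x i) ⁻¹'
      (A ∩ {y | L y ≤ ENNReal.ofReal (rexp t)})) ≤ rexp t * (stdGaussian n).real A := by
    rw [← map_measureReal_apply (by fun_prop)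
      (hA.inter (measurableSet_le measurable_L measurable_const)),
      map_affine_stdGaussian_eq_withDensity a hρ]
    refine (ENNReal.toReal_mono (by finiteness)
      (withDensity_inter_le _ measurable_L hA _)).trans_eq ?_
    rw [ENNReal.toReal_mul, ENNReal.toReal_ofReal (exp_pos t).le, measureReal_def]
  rw [event_eq, Real.exp_neg, inv_mul_le_iff₀ (exp_pos t)]
  exact bound

lemma measurePreserving_mulVec_stdGaussian {V : Matrix (Fin n) (Fin n) ℝ} (hV : Vᵀ * V = 1) :
    MeasurePreserving (fun w => V *ᵥ w) (stdGaussian n) (stdGaussian n) := by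
  have hVu : V ∈ unitary (Matrix (Fin n) (Fin n) ℝ) := by
    rw [← Matrix.unitaryGroup, Matrix.mem_unitaryGroup_iff', Matrix.star_eq_conjTranspose,
      Matrix.conjTranspose_eq_transpose_of_trivial, hV]
  have hmem := Unitary.map_mem (Matrix.toEuclideanCLM (n := Fin n) (𝕜 := ℝ)) hVu
  set E := Unitary.linearIsometryEquiv ⟨_, hmem⟩
  have ofLp_stdGaussian : MeasurePreserving WithLp.ofLp
      (ProbabilityTheory.stdGaussian (EuclideanSpace ℝ (Fin n))) (stdGaussian n) := by
    refine ⟨by fun_prop, ?_⟩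
    rw [← map_pi_eq_stdGaussian, Measure.map_map (by fun_prop) (by fun_prop)]
    exact Measure.map_id
  have toLp_stdGaussian : MeasurePreserving (WithLp.toLp 2) (stdGaussian n)
      (ProbabilityTheory.stdGaussian (EuclideanSpace ℝ (Fin n))) :=
    ⟨by fun_prop, map_pi_eq_stdGaussian⟩
  have isometry : MeasurePreserving E (ProbabilityTheory.stdGaussian (EuclideanSpace ℝ (Fin n)))
      (ProbabilityTheory.stdGaussian (EuclideanSpace ℝ (Fin n))) :=
    ⟨E.continuous.measurable, stdGaussian_map E⟩
  exact ofLp_stdGaussian.comp (isometry.comp toLp_stdGaussian)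

end Gaussian

section QuadraticForm

/-- The binary quadratic form `p x² + q x y + t y²`, evaluated at a pair `(x, y)`. -/
def binaryForm (p q t : ℝ) (z : ℝ × ℝ) : ℝ :=
  p * z.1 ^ 2 + q * (z.1 * z.2) + t * z.2 ^ 2

variable {ι : Type*} [Fintype ι] {μ : Measure ℝ} [IsProbabilityMeasure μ]

lemma measurable_binaryForm (p q t : ℝ) : Measurable (binaryForm p q t) := by
  unfold binaryForm
  fun_prop

lemma binaryForm_sq_le {p q t b : ℝ} (hp : |p| ≤ b) (hq : |q| ≤ b) (ht : |t| ≤ b) (z : ℝ × ℝ) :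
    binaryForm p q t z ^ 2 ≤ 9 / 2 * b ^ 2 * (z.1 ^ 4 + z.2 ^ 4) := by
  have hb : 0 ≤ b := (abs_nonneg p).trans hp
  have abs_le : |binaryForm p q t z| ≤ 3 / 2 * b * (z.1 ^ 2 + z.2 ^ 2) := by
    calc |binaryForm p q t z| ≤ |p| * z.1 ^ 2 + |q| * (|z.1| * |z.2|) + |t| * z.2 ^ 2 := by
          refine (abs_add_three _ _ _).trans_eq ?_
          simp only [abs_mul, abs_pow, sq_abs]
      _ ≤ b * z.1 ^ 2 + b * (|z.1| * |z.2|) + b * z.2 ^ 2 := by gcongr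
      _ ≤ _ := by nlinarith [mul_nonneg hb (sq_nonneg (|z.1| - |z.2|)), sq_abs z.1, sq_abs z.2]
  calc binaryForm p q t z ^ 2 ≤ (3 / 2 * b * (z.1 ^ 2 + z.2 ^ 2)) ^ 2 :=
        sq_le_sq.2 (abs_le.trans (le_abs_self _))
    _ ≤ _ := by nlinarith [mul_nonneg (sq_nonneg b) (sq_nonneg (z.1 ^ 2 - z.2 ^ 2))]

lemma memLp_mul_of_memLp_four {Ω : Type*} [MeasurableSpace Ω] {P : Measure Ω} {f g : Ω → ℝ}
    (hf : MemLp f 4 P) (hg : MemLp g 4 P) : MemLp (fun x => f x * g x) 2 P := by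
  have : ENNReal.HolderTriple 4 4 2 := by
    constructor
    rw [← two_mul, show (4 : ENNReal) = 2 * 2 by norm_num, ENNReal.mul_inv (by simp) (by simp),
      ← mul_assoc, ENNReal.mul_inv_cancel (by simp) (by simp), one_mul]
  exact hg.mul hf

lemma memLp_binaryForm (hμ : MemLp id 4 μ) (p q t : ℝ) :
    MemLp (binaryForm p q t) 2 (μ.prod μ) := by
  have memLp_fst : MemLp (fun z : ℝ × ℝ => z.1) 4 (μ.prod μ) :=
    hμ.comp_measurePreserving measurePreserving_fst
  have memLp_snd : MemLp (fun z : ℝ × ℝ => z.2) 4 (μ.prod μ) :=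
    hμ.comp_measurePreserving measurePreserving_snd
  unfold binaryForm
  simp only [sq]
  exact (((memLp_mul_of_memLp_four memLp_fst memLp_fst).const_mul p).add
    ((memLp_mul_of_memLp_four memLp_fst memLp_snd).const_mul q)).add
    ((memLp_mul_of_memLp_four memLp_snd memLp_snd).const_mul t)

lemma integral_binaryForm (hμ : MemLp id 2 μ) (h_mean : ∫ x, x ∂μ = 0)
    (h_sq : ∫ x, x ^ 2 ∂μ = 1) (p q t : ℝ) :
    ∫ z, binaryForm p q t z ∂μ.prod μ = p + t := by
  have integrable_id : Integrable (fun x : ℝ => x) μ := hμ.integrable one_le_two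
  have integrable_sq : Integrable (fun x : ℝ => x ^ 2) μ := hμ.integrable_sq
  have integrable_fst_sq : Integrable (fun z : ℝ × ℝ => p * z.1 ^ 2) (μ.prod μ) :=
    (integrable_sq.comp_fst μ).const_mul p
  have integrable_mul : Integrable (fun z : ℝ × ℝ => q * (z.1 * z.2)) (μ.prod μ) :=
    (integrable_id.mul_prod integrable_id).const_mul q
  have integrable_snd_sq : Integrable (fun z : ℝ × ℝ => t * z.2 ^ 2) (μ.prod μ) :=
    (integrable_sq.comp_snd μ).const_mul t
  have integrable_fst_sq_add_mul : Integrable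
      (fun z : ℝ × ℝ => p * z.1 ^ 2 + q * (z.1 * z.2)) (μ.prod μ) :=
    integrable_fst_sq.add integrable_mul
  unfold binaryForm
  rw [integral_add integrable_fst_sq_add_mul integrable_snd_sq,
    integral_add integrable_fst_sq integrable_mul]
  simp only [integral_const_mul]
  rw [integral_fun_fst (fun x : ℝ => x ^ 2), integral_fun_snd (fun x : ℝ => x ^ 2),
    integral_prod_mul (fun x : ℝ => x) (fun x : ℝ => x)]
  simp [h_mean, h_sq]

lemma variance_binaryForm_le (hμ : MemLp id 4 μ) {p q t b : ℝ} (hp : |p| ≤ b) (hq : |q| ≤ b)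
    (ht : |t| ≤ b) : Var[binaryForm p q t; μ.prod μ] ≤ 9 * b ^ 2 * ∫ x, x ^ 4 ∂μ := by
  have integrable_pow_four : Integrable (fun x : ℝ => x ^ 4) μ := by
    simpa [Even.pow_abs (by decide : Even 4)] using hμ.integrable_norm_pow (p := 4) (by norm_num)
  have integrable_fst : Integrable (fun z : ℝ × ℝ => z.1 ^ 4) (μ.prod μ) :=
    integrable_pow_four.comp_fst μ
  have integrable_snd : Integrable (fun z : ℝ × ℝ => z.2 ^ 4) (μ.prod μ) :=
    integrable_pow_four.comp_snd μ
  calc Var[binaryForm p q t; μ.prod μ] ≤ ∫ z, binaryForm p q t z ^ 2 ∂μ.prod μ :=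
        variance_le_expectation_sq (measurable_binaryForm p q t).aestronglyMeasurable
    _ ≤ ∫ z, 9 / 2 * b ^ 2 * (z.1 ^ 4 + z.2 ^ 4) ∂μ.prod μ :=
        integral_mono (memLp_binaryForm hμ p q t).integrable_sq
          ((integrable_fst.add integrable_snd).const_mul _) (binaryForm_sq_le hp hq ht)
    _ = 9 * b ^ 2 * ∫ x, x ^ 4 ∂μ := by
        rw [integral_const_mul, integral_add integrable_fst integrable_snd,
          integral_fun_fst (fun x : ℝ => x ^ 4), integral_fun_snd (fun x : ℝ => x ^ 4)]
        simp only [probReal_univ, one_smul]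
        ring

lemma measureReal_sum_binaryForm_ge_le (hμ : MemLp id 4 μ) (h_mean : ∫ x, x ∂μ = 0)
    (h_sq : ∫ x, x ^ 2 ∂μ = 1) {p q t : ι → ℝ} {b c : ℝ} (hp : ∀ i, |p i| ≤ b)
    (hq : ∀ i, |q i| ≤ b) (ht : ∀ i, |t i| ≤ b) (hc : 0 < c) :
    ((Measure.pi fun _ : ι => μ).prod (Measure.pi fun _ : ι => μ)).real
      {z | ∑ i, (p i + t i) + c ≤ ∑ i, binaryForm (p i) (q i) (t i) (z.1 i, z.2 i)} ≤
      Fintype.card ι * (9 * b ^ 2 * ∫ x, x ^ 4 ∂μ) / c ^ 2 := by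
  have measurableSet_event : MeasurableSet {z : (ι → ℝ) × (ι → ℝ) |
      ∑ i, (p i + t i) + c ≤ ∑ i, binaryForm (p i) (q i) (t i) (z.1 i, z.2 i)} :=
    measurableSet_le measurable_const <| Finset.measurable_sum _ fun i _ =>
      (measurable_binaryForm _ _ _).comp (by fun_prop)
  have chebyshev := measureReal_pi_sum_ge_le (X := fun i => binaryForm (p i) (q i) (t i))
    (fun i => memLp_binaryForm hμ _ _ _)
    (fun i => variance_binaryForm_le hμ (hp i) (hq i) (ht i)) hc
  simp only [integral_binaryForm (hμ.mono_exponent (by norm_num)) h_mean h_sq] at chebyshev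
  rwa [← (measurePreserving_arrowProdEquivProdArrow ℝ ℝ ι (fun _ => μ)
    fun _ => μ).measureReal_preimage measurableSet_event.nullMeasurableSet]

end QuadraticForm

section RandomCodingCurve

variable {n : ℕ} {lam : Fin n → ℝ} {R T : ℝ}

lemma exists_Rrc_eq (hn : 0 < n) (hlam : ∀ i, 0 ≤ lam i) (hsum : ∑ i, lam i = n) (hR : 0 < R) :
    ∃ T, 0 < T ∧ Rrc lam T = R := by
  obtain ⟨j, -, hj⟩ : ∃ j ∈ Finset.univ, 1 ≤ lam j :=
    Finset.exists_le_of_sum_le ⟨⟨0, hn⟩, Finset.mem_univ _⟩ (by simp [hsum])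
  set Tmax : ℝ := 2 ^ (2 * n * R) with hTmax
  have Tmax_pos : 0 < Tmax := by positivity
  have continuousOn_Rrc : ContinuousOn (Rrc lam) (Set.Icc 0 Tmax) := by
    unfold Rrc Real.logb
    refine continuousOn_const.mul (continuousOn_finsetSum _ fun i _ => ?_)
    refine (ContinuousOn.log (by fun_prop) fun x hx => ?_).div_const _
    have := mul_nonneg (hlam i) hx.1
    positivity
  have Rrc_zero : Rrc lam 0 = 0 := by simp [Rrc]
  have le_Rrc_Tmax : R ≤ Rrc lam Tmax := by
    have le_logb : 2 * n * R ≤ Real.logb 2 (1 + lam j * Tmax) := by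
      rw [Real.le_logb_iff_rpow_le one_lt_two (by nlinarith), ← hTmax]
      nlinarith
    have logb_nonneg : ∀ i, 0 ≤ Real.logb 2 (1 + lam i * Tmax) := fun i =>
      Real.logb_nonneg one_lt_two (by nlinarith [mul_nonneg (hlam i) Tmax_pos.le])
    rw [Rrc, div_mul_eq_mul_div, one_mul, le_div_iff₀ (by positivity), mul_comm]
    exact le_logb.trans (Finset.single_le_sum (fun i _ => logb_nonneg i) (Finset.mem_univ j))
  obtain ⟨T, hT, hTR⟩ := intermediate_value_Icc Tmax_pos.le continuousOn_Rrc
    ⟨Rrc_zero.trans_le hR.le, le_Rrc_Tmax⟩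
  refine ⟨T, hT.1.lt_of_ne ?_, hTR⟩
  rintro rfl
  exact hR.ne (Rrc_zero.symm.trans hTR)

lemma Trc_pos (hn : 0 < n) (hlam : ∀ i, 0 ≤ lam i) (hsum : ∑ i, lam i = n) (hR : 0 < R) :
    0 < Trc lam R :=
  (Classical.epsilon_spec (exists_Rrc_eq hn hlam hsum hR)).1

lemma Rrc_Trc (hn : 0 < n) (hlam : ∀ i, 0 ≤ lam i) (hsum : ∑ i, lam i = n) (hR : 0 < R) :
    Rrc lam (Trc lam R) = R :=
  (Classical.epsilon_spec (exists_Rrc_eq hn hlam hsum hR)).2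

lemma sum_log_eq_Rrc (hn : n ≠ 0) (lam : Fin n → ℝ) (T : ℝ) :
    ∑ i, Real.log (1 + lam i * T) = 2 * n * (Rrc lam T * Real.log 2) := by
  have : Real.log 2 ≠ 0 := (Real.log_pos one_lt_two).ne'
  simp only [Rrc, Real.logb, ← Finset.sum_div]
  generalize ∑ i, Real.log (1 + lam i * T) = L
  field_simp

lemma sum_div_eq_Drc (hn : n ≠ 0) (lam : Fin n → ℝ) (T : ℝ) :
    ∑ i, lam i / (1 + lam i * T) = n * Drc lam T := by
  rw [Drc, ← mul_assoc, mul_one_div_cancel (Nat.cast_ne_zero.2 hn), one_mul]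

lemma two_mul_Rrc_mul_log_two_le (hn : 0 < n) (hlam : ∀ i, 0 ≤ lam i) (hsum : ∑ i, lam i = n)
    (hT : 0 ≤ T) : 2 * (Rrc lam T * Real.log 2) ≤ T := by
  have hn' : (0 : ℝ) < n := Nat.cast_pos.2 hn
  have sum_log_le : ∑ i, Real.log (1 + lam i * T) ≤ n * T := by
    rw [← hsum, Finset.sum_mul]
    refine Finset.sum_le_sum fun i _ => ?_
    have := mul_nonneg (hlam i) hT
    linarith [Real.log_le_sub_one_of_pos (by positivity : 0 < 1 + lam i * T)]
  rw [sum_log_eq_Rrc hn.ne'] at sum_log_le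
  exact le_of_mul_le_mul_left (by linarith) hn'

lemma Drc_nonneg (hlam : ∀ i, 0 ≤ lam i) (hT : 0 ≤ T) : 0 ≤ Drc lam T := by
  refine mul_nonneg (by positivity) (Finset.sum_nonneg fun i _ => ?_)
  have := mul_nonneg (hlam i) hT
  exact div_nonneg (hlam i) (by positivity)

lemma Drc_le_one (hn : 0 < n) (hlam : ∀ i, 0 ≤ lam i) (hsum : ∑ i, lam i = n) (hT : 0 ≤ T) :
    Drc lam T ≤ 1 := by
  have hn' : (0 : ℝ) < n := Nat.cast_pos.2 hn
  have sum_le : ∑ i, lam i / (1 + lam i * T) ≤ ∑ i, lam i := Finset.sum_le_sum fun i _ =>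
    div_le_self (hlam i) (le_add_of_nonneg_right (mul_nonneg (hlam i) hT))
  rw [sum_div_eq_Drc hn.ne', hsum] at sum_le
  exact le_of_mul_le_mul_left (by linarith) hn'

end RandomCodingCurve

section TestChannel

variable {n : ℕ} {lam : Fin n → ℝ} {l s T : ℝ}

/-- The Wiener gain `l T / (1 + l T)` of a component of weight `l`, that is, its covariance with
its reconstruction through the test channel. -/
noncomputable def wienerGain (l T : ℝ) : ℝ :=
  l * T / (1 + l * T)

lemma one_sub_wienerGain (hl : 0 ≤ l) (hT : 0 ≤ T) : 1 - wienerGain l T = (1 + l * T)⁻¹ := by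
  have := mul_nonneg hl hT
  rw [wienerGain]
  field_simp
  ring

lemma wienerGain_nonneg (hl : 0 ≤ l) (hT : 0 ≤ T) : 0 ≤ wienerGain l T := by
  unfold wienerGain
  positivity

lemma wienerGain_lt_one (hl : 0 ≤ l) (hT : 0 ≤ T) : wienerGain l T < 1 := by
  have := mul_nonneg hl hT
  rw [← sub_pos, one_sub_wienerGain hl hT]
  positivity

lemma mul_one_sub_wienerGain (hl : 0 ≤ l) (hT : 0 < T) :
    l * (1 - wienerGain l T) = wienerGain l T / T := by
  rw [one_sub_wienerGain hl hT.le, wienerGain]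
  field_simp

lemma sum_wienerGain (hn : n ≠ 0) (lam : Fin n → ℝ) (T : ℝ) :
    ∑ i, wienerGain (lam i) T = T * (n * Drc lam T) := by
  rw [← sum_div_eq_Drc hn, Finset.mul_sum]
  exact Finset.sum_congr rfl fun i _ => by rw [wienerGain]; ring

lemma sum_neg_log_one_sub_wienerGain (hn : n ≠ 0) (hlam : ∀ i, 0 ≤ lam i) (hT : 0 ≤ T) :
    ∑ i, -Real.log (1 - wienerGain (lam i) T) = 2 * n * (Rrc lam T * Real.log 2) := by
  rw [← sum_log_eq_Rrc hn]
  exact Finset.sum_congr rfl fun i _ => by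
    rw [one_sub_wienerGain (hlam i) hT, Real.log_inv, neg_neg]

/-- The variance of the isotropic codewords for which the test channel is cheapest: the mean of
the Wiener gains, weighted by the gains themselves. -/
noncomputable def matchedVariance (lam : Fin n → ℝ) (T : ℝ) : ℝ :=
  (∑ i, wienerGain (lam i) T ^ 2) / ∑ i, wienerGain (lam i) T

lemma sum_wienerGain_sq_le (hlam : ∀ i, 0 ≤ lam i) (hT : 0 ≤ T) :
    ∑ i, wienerGain (lam i) T ^ 2 ≤ ∑ i, wienerGain (lam i) T :=
  Finset.sum_le_sum fun i _ => pow_le_of_le_one (wienerGain_nonneg (hlam i) hT)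
    (wienerGain_lt_one (hlam i) hT).le two_ne_zero

lemma matchedVariance_mem_Icc (hlam : ∀ i, 0 ≤ lam i) (hT : 0 ≤ T) :
    matchedVariance lam T ∈ Set.Icc (0 : ℝ) 1 := by
  have sum_nonneg : 0 ≤ ∑ i, wienerGain (lam i) T :=
    Finset.sum_nonneg fun i _ => wienerGain_nonneg (hlam i) hT
  exact ⟨div_nonneg (Finset.sum_nonneg fun i _ => sq_nonneg _) sum_nonneg,
    div_le_one_of_le₀ (sum_wienerGain_sq_le hlam hT) sum_nonneg⟩

lemma matchedVariance_mul_sum (hlam : ∀ i, 0 ≤ lam i) (hT : 0 ≤ T) :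
    matchedVariance lam T * ∑ i, wienerGain (lam i) T = ∑ i, wienerGain (lam i) T ^ 2 := by
  refine div_mul_cancel_of_imp fun h => ?_
  exact ((sum_wienerGain_sq_le hlam hT).trans_eq h).antisymm
    (Finset.sum_nonneg fun i _ => sq_nonneg _)

lemma sum_mean_distortion_le (hn : 0 < n) (hlam : ∀ i, 0 ≤ lam i) (hsum : ∑ i, lam i = n)
    (hT : 0 < T) {ε : ℝ} (hε : 0 ≤ ε) (hs : s ≤ matchedVariance lam T + ε) :
    ∑ i, (lam i * (1 - wienerGain (lam i) T) ^ 2 + lam i * s * (1 - wienerGain (lam i) T)) ≤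
      n * (Drc lam T + ε) := by
  set σ := matchedVariance lam T
  have hD := Drc_nonneg hlam hT.le
  calc ∑ i, (lam i * (1 - wienerGain (lam i) T) ^ 2 + lam i * s * (1 - wienerGain (lam i) T))
      = ∑ i, ((1 + s) * wienerGain (lam i) T - wienerGain (lam i) T ^ 2) / T :=
        Finset.sum_congr rfl fun i _ => by
          linear_combination
            (1 - wienerGain (lam i) T + s) * mul_one_sub_wienerGain (hlam i) hT
    _ = (1 + s - σ) * (∑ i, wienerGain (lam i) T) / T := by
        rw [← Finset.sum_div, Finset.sum_sub_distrib, ← Finset.mul_sum,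
          ← matchedVariance_mul_sum hlam hT.le]
        ring
    _ = (1 + s - σ) * (n * Drc lam T) := by
        rw [sum_wienerGain hn.ne']
        field_simp
    _ ≤ (1 + ε) * (n * Drc lam T) := by
        gcongr
        linarith
    _ = n * (Drc lam T + ε * Drc lam T) := by ring
    _ ≤ n * (Drc lam T + ε) := by
        gcongr
        exact mul_le_of_le_one_right hε (Drc_le_one hn hlam hsum hT.le)

lemma sum_mean_information_le (hn : n ≠ 0) (hlam : ∀ i, 0 ≤ lam i) (hT : 0 ≤ T) (hs : 0 < s)
    (hσ : matchedVariance lam T ≤ s) :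
    ∑ i, (-Real.log (1 - wienerGain (lam i) T) / 2 +
      (wienerGain (lam i) T ^ 2 / (2 * s) + -(wienerGain (lam i) T / 2))) ≤
      n * (Rrc lam T * Real.log 2) := by
  have sum_nonneg : 0 ≤ ∑ i, wienerGain (lam i) T :=
    Finset.sum_nonneg fun i _ => wienerGain_nonneg (hlam i) hT
  have energy_le :
      (∑ i, wienerGain (lam i) T ^ 2) / (2 * s) ≤ (∑ i, wienerGain (lam i) T) / 2 := by
    rw [div_le_div_iff₀ (by positivity) two_pos, ← matchedVariance_mul_sum hlam hT]
    nlinarith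
  rw [Finset.sum_add_distrib, Finset.sum_add_distrib, ← Finset.sum_div, ← Finset.sum_div,
    Finset.sum_neg_distrib (fun i => _ / 2), ← Finset.sum_div,
    sum_neg_log_one_sub_wienerGain hn hlam hT]
  linarith

/-- The `k`-th variance `(k + 1) / K` of the uniform grid of `K` codebook variances. -/
noncomputable def gridVariance (K : ℕ) (k : Fin K) : ℝ :=
  (k + 1) / K

lemma inv_le_gridVariance {K : ℕ} (k : Fin K) : (K : ℝ)⁻¹ ≤ gridVariance K k := by
  rw [gridVariance, ← one_div]
  gcongr
  exact le_add_of_nonneg_left (Nat.cast_nonneg _)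

lemma gridVariance_le_one {K : ℕ} (k : Fin K) : gridVariance K k ≤ 1 :=
  div_le_one_of_le₀ (mod_cast k.2) (Nat.cast_nonneg K)

lemma exists_gridVariance_mem_Icc {K : ℕ} (hK : 0 < K) {x : ℝ} (hx : x ∈ Set.Icc (0 : ℝ) 1) :
    ∃ k : Fin K, gridVariance K k ∈ Set.Icc x (x + 1 / K) := by
  have hK' : (0 : ℝ) < K := Nat.cast_pos.2 hK
  have ceil_le : ⌈x * K⌉₊ ≤ K := Nat.ceil_le.2 (mul_le_of_le_one_left hK'.le hx.2)
  have xK_nonneg : 0 ≤ x * K := mul_nonneg hx.1 hK'.le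
  refine ⟨⟨⌈x * K⌉₊ - 1, by lia⟩, ?_, ?_⟩
  · rw [gridVariance, le_div_iff₀ hK']
    exact (Nat.le_ceil _).trans (mod_cast (by lia : ⌈x * K⌉₊ ≤ ⌈x * K⌉₊ - 1 + 1))
  · rw [gridVariance, div_le_iff₀ hK', add_mul, one_div_mul_cancel hK'.ne']
    gcongr
    rcases Nat.eq_zero_or_pos ⌈x * K⌉₊ with h | h
    · simpa [h] using xK_nonneg
    · rw [Nat.cast_sub h, Nat.cast_one, sub_le_iff_le_add]
      exact (Nat.ceil_lt_add_one xK_nonneg).le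

end TestChannel

section Typicality

variable {n : ℕ} {lam : Fin n → ℝ} {b r s t T ε κ : ℝ}

/-- The fourth moment of `N(0, 1)`. -/
noncomputable def gaussianFourthMoment : ℝ :=
  ∫ x, x ^ 4 ∂gaussianReal 0 1

lemma gaussianFourthMoment_nonneg : 0 ≤ gaussianFourthMoment :=
  integral_nonneg fun x => by positivity

lemma integral_sq_gaussianReal : ∫ x, x ^ 2 ∂gaussianReal 0 1 = 1 := by
  have := variance_fun_id_gaussianReal (μ := 0) (v := 1)
  rw [variance_eq_integral measurable_id'.aemeasurable] at this
  simpa using this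

lemma measureReal_stdGaussian_sum_binaryForm_ge_le (hn : 0 < n) {p q t : Fin n → ℝ}
    (hp : ∀ i, |p i| ≤ b) (hq : ∀ i, |q i| ≤ b) (ht : ∀ i, |t i| ≤ b) (hκ : 0 < κ) :
    ((stdGaussian n).prod (stdGaussian n)).real
      {z | ∑ i, (p i + t i) + n * κ ≤ ∑ i, binaryForm (p i) (q i) (t i) (z.1 i, z.2 i)} ≤
      9 * b ^ 2 * gaussianFourthMoment / (n * κ ^ 2) := by
  have hn' : (0 : ℝ) < n := Nat.cast_pos.2 hn
  refine (measureReal_sum_binaryForm_ge_le (memLp_id_gaussianReal' 4 (by simp))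
    (by simp) integral_sq_gaussianReal hp hq ht (mul_pos hn' hκ)).trans_eq ?_
  rw [gaussianFourthMoment, Fintype.card_fin]
  field_simp

lemma continuous_dSig (Sig : Matrix (Fin n) (Fin n) ℝ) :
    Continuous fun z : (Fin n → ℝ) × (Fin n → ℝ) => dSig Sig z.1 z.2 := by
  unfold dSig
  fun_prop

lemma dSig_diagonal (lam w v : Fin n → ℝ) :
    dSig (diagonal lam) w v = ∑ i, lam i * (w i - v i) ^ 2 := by
  simp only [dSig, dotProduct, mulVec_diagonal, Pi.sub_apply]
  exact Finset.sum_congr rfl fun i _ => by ring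

/-- The test channel with Wiener gains, with source `w`, noise `x`, and an output normalised by
the standard deviation `√s` of the codewords. -/
noncomputable def testChannel (lam : Fin n → ℝ) (T s : ℝ) (w x : Fin n → ℝ) : Fin n → ℝ :=
  fun i => wienerGain (lam i) T / √s * w i + √(1 - wienerGain (lam i) T) * x i

/-- The log-likelihood ratio of the output law of `testChannel` given `w` to `N(0, I)`, evaluated
at the output. -/
noncomputable def informationDensity (lam : Fin n → ℝ) (T s : ℝ) (w x : Fin n → ℝ) : ℝ :=
  ∑ i, (-Real.log √(1 - wienerGain (lam i) T) + (testChannel lam T s w x i ^ 2 - x i ^ 2) / 2)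

lemma measurable_testChannel (lam : Fin n → ℝ) (T s : ℝ) :
    Measurable fun z : (Fin n → ℝ) × (Fin n → ℝ) => testChannel lam T s z.1 z.2 := by
  unfold testChannel
  fun_prop

lemma measurable_informationDensity (lam : Fin n → ℝ) (T s : ℝ) :
    Measurable fun z : (Fin n → ℝ) × (Fin n → ℝ) => informationDensity lam T s z.1 z.2 := by
  have := measurable_testChannel lam T s
  unfold informationDensity
  fun_prop

lemma dSig_testChannel (hlam : ∀ i, 0 ≤ lam i) (hT : 0 ≤ T) (hs : 0 < s) (w x : Fin n → ℝ) :
    dSig (diagonal lam) w (√s • testChannel lam T s w x) =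
      ∑ i, binaryForm (lam i * (1 - wienerGain (lam i) T) ^ 2)
        (-(2 * (lam i * (1 - wienerGain (lam i) T)) * (√s * √(1 - wienerGain (lam i) T))))
        (lam i * s * (1 - wienerGain (lam i) T)) (w i, x i) := by
  rw [dSig_diagonal]
  refine Finset.sum_congr rfl fun i _ => ?_
  have hρ := Real.sq_sqrt (sub_nonneg.2 (wienerGain_lt_one (hlam i) hT).le)
  set u := wienerGain (lam i) T
  have error_eq : w i - (√s • testChannel lam T s w x) i =
      (1 - u) * w i - √s * √(1 - u) * x i := by
    simp only [Pi.smul_apply, smul_eq_mul, testChannel]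
    have := (Real.sqrt_pos.2 hs).ne'
    field_simp
    ring
  rw [error_eq, binaryForm]
  linear_combination (lam i * x i ^ 2 * √(1 - u) ^ 2) * Real.sq_sqrt hs.le +
    lam i * x i ^ 2 * s * hρ

lemma informationDensity_eq (hlam : ∀ i, 0 ≤ lam i) (hT : 0 ≤ T) (hs : 0 < s)
    (w x : Fin n → ℝ) :
    informationDensity lam T s w x = ∑ i, -Real.log (1 - wienerGain (lam i) T) / 2 +
      ∑ i, binaryForm (wienerGain (lam i) T ^ 2 / (2 * s))
        (wienerGain (lam i) T * √(1 - wienerGain (lam i) T) / √s)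
        (-(wienerGain (lam i) T / 2)) (w i, x i) := by
  rw [informationDensity, ← Finset.sum_add_distrib]
  refine Finset.sum_congr rfl fun i _ => ?_
  have hu := sub_nonneg.2 (wienerGain_lt_one (hlam i) hT).le
  have hρ := Real.sq_sqrt hu
  have hs' := Real.sq_sqrt hs.le
  have := (Real.sqrt_pos.2 hs).ne'
  rw [Real.log_sqrt hu, testChannel, binaryForm]
  set u := wienerGain (lam i) T
  nth_rewrite 2 [← hs']
  field_simp
  linear_combination √s ^ 2 * x i ^ 2 * hρ

lemma measureReal_distortion_ge_le (hn : 0 < n) (hlam : ∀ i, 0 ≤ lam i)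
    (hsum : ∑ i, lam i = n) (hT : 0 < T) (hs : 0 < s) (hs1 : s ≤ 1) (hε : 0 ≤ ε)
    (hsε : s ≤ matchedVariance lam T + ε) (hb : 2 / T ≤ b) (hκ : 0 < κ) :
    ((stdGaussian n).prod (stdGaussian n)).real {z | n * (Drc lam T + ε + κ) ≤
      dSig (diagonal lam) z.1 (√s • testChannel lam T s z.1 z.2)} ≤
      9 * b ^ 2 * gaussianFourthMoment / (n * κ ^ 2) := by
  have hu0 : ∀ i, 0 ≤ wienerGain (lam i) T := fun i => wienerGain_nonneg (hlam i) hT.le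
  have hu1 : ∀ i, 0 ≤ 1 - wienerGain (lam i) T := fun i =>
    sub_nonneg.2 (wienerGain_lt_one (hlam i) hT.le).le
  have error_nonneg : ∀ i, 0 ≤ lam i * (1 - wienerGain (lam i) T) := fun i =>
    mul_nonneg (hlam i) (hu1 i)
  have error_le : ∀ i, 2 * (lam i * (1 - wienerGain (lam i) T)) ≤ b := fun i => by
    rw [mul_one_sub_wienerGain (hlam i) hT, ← mul_div_assoc]
    refine le_trans ?_ hb
    gcongr
    linarith [hu1 i]
  have sqrt_le_one : ∀ i, √s * √(1 - wienerGain (lam i) T) ≤ 1 := fun i =>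
    mul_le_one₀ (Real.sqrt_le_one.2 hs1) (Real.sqrt_nonneg _)
      (Real.sqrt_le_one.2 (by linarith [hu0 i]))
  have first_le : ∀ i, |lam i * (1 - wienerGain (lam i) T) ^ 2| ≤ b := fun i => by
    rw [abs_of_nonneg (mul_nonneg (hlam i) (sq_nonneg _))]
    nlinarith [error_le i, error_nonneg i, hu0 i]
  have cross_le : ∀ i, |-(2 * (lam i * (1 - wienerGain (lam i) T)) *
      (√s * √(1 - wienerGain (lam i) T)))| ≤ b := fun i => by
    rw [abs_neg, abs_of_nonneg (by have := error_nonneg i; positivity)]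
    exact (mul_le_of_le_one_right (by linarith [error_nonneg i]) (sqrt_le_one i)).trans (error_le i)
  have last_le : ∀ i, |lam i * s * (1 - wienerGain (lam i) T)| ≤ b := fun i => by
    rw [abs_of_nonneg (mul_nonneg (mul_nonneg (hlam i) hs.le) (hu1 i))]
    nlinarith [error_le i, error_nonneg i]
  refine (measureReal_mono fun z hz => ?_).trans
    (measureReal_stdGaussian_sum_binaryForm_ge_le hn first_le cross_le last_le hκ)
  rw [Set.mem_ofPred_eq, ← dSig_testChannel hlam hT.le hs]
  exact le_trans (by linarith [sum_mean_distortion_le hn hlam hsum hT hε hsε]) hz.out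

lemma measureReal_informationDensity_ge_le (hn : 0 < n) (hlam : ∀ i, 0 ≤ lam i)
    (hT : 0 ≤ T) (hs : 0 < s) (hs1 : s ≤ 1) (hσ : matchedVariance lam T ≤ s) (hb : s⁻¹ ≤ b)
    (hκ : 0 < κ) :
    ((stdGaussian n).prod (stdGaussian n)).real {z | n * (Rrc lam T * Real.log 2 + κ) ≤
      informationDensity lam T s z.1 z.2} ≤ 9 * b ^ 2 * gaussianFourthMoment / (n * κ ^ 2) := by
  have hu0 : ∀ i, 0 ≤ wienerGain (lam i) T := fun i => wienerGain_nonneg (hlam i) hT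
  have hu1 : ∀ i, wienerGain (lam i) T ≤ 1 := fun i => (wienerGain_lt_one (hlam i) hT).le
  have one_le_inv : 1 ≤ s⁻¹ := (one_le_inv₀ hs).2 hs1
  have mean_le := sum_mean_information_le hn.ne' hlam hT hs hσ
  rw [Finset.sum_add_distrib] at mean_le
  have first_le : ∀ i, |wienerGain (lam i) T ^ 2 / (2 * s)| ≤ b := fun i => by
    rw [abs_of_nonneg (by positivity)]
    calc wienerGain (lam i) T ^ 2 / (2 * s) ≤ 1 / (1 * s) := by
          gcongr
          · exact pow_le_one₀ (hu0 i) (hu1 i)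
          · exact one_le_two
      _ ≤ b := by simpa using hb
  have cross_le : ∀ i,
      |wienerGain (lam i) T * √(1 - wienerGain (lam i) T) / √s| ≤ b := fun i => by
    have := hu0 i
    rw [abs_of_nonneg (by positivity)]
    calc wienerGain (lam i) T * √(1 - wienerGain (lam i) T) / √s ≤ 1 / s := by
          gcongr
          · exact mul_le_one₀ (hu1 i) (Real.sqrt_nonneg _) (Real.sqrt_le_one.2 (by linarith))
          · exact Real.le_sqrt_of_sq_le (by nlinarith)
      _ ≤ b := by simpa using hb
  have last_le : ∀ i, |-(wienerGain (lam i) T / 2)| ≤ b := fun i => by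
    rw [abs_neg, abs_of_nonneg (by linarith [hu0 i])]
    linarith [hu1 i]
  refine (measureReal_mono fun z hz => ?_).trans
    (measureReal_stdGaussian_sum_binaryForm_ge_le hn first_le cross_le last_le hκ)
  have := hz.out
  rw [informationDensity_eq hlam hT hs] at this
  rw [Set.mem_ofPred_eq]
  linarith

/-- The pairs of a source point `w` and a codeword `z` for which `c • z` reproduces `w` within
distortion `r`. -/
def closePairs (Sig : Matrix (Fin n) (Fin n) ℝ) (c r : ℝ) : Set ((Fin n → ℝ) × (Fin n → ℝ)) :=
  {z | dSig Sig z.1 (c • z.2) ≤ r}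

lemma measurableSet_closePairs (Sig : Matrix (Fin n) (Fin n) ℝ) (c r : ℝ) :
    MeasurableSet (closePairs Sig c r) :=
  measurableSet_le ((continuous_dSig Sig).comp (by fun_prop :
    Continuous fun z : (Fin n → ℝ) × (Fin n → ℝ) => (z.1, c • z.2))).measurable measurable_const

/-- The pairs of a source point and a noise for which the test channel exceeds the distortion `r`
or the information density `t`. -/
def atypicalPairs (lam : Fin n → ℝ) (T s r t : ℝ) : Set ((Fin n → ℝ) × (Fin n → ℝ)) :=
  {z | r ≤ dSig (diagonal lam) z.1 (√s • testChannel lam T s z.1 z.2)} ∪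
    {z | t ≤ informationDensity lam T s z.1 z.2}

lemma measurableSet_atypicalPairs (lam : Fin n → ℝ) (T s r t : ℝ) :
    MeasurableSet (atypicalPairs lam T s r t) :=
  (measurableSet_le measurable_const ((continuous_dSig _).measurable.comp
    (measurable_fst.prodMk ((measurable_testChannel lam T s).const_smul √s)))).union
    (measurableSet_le measurable_const (measurable_informationDensity lam T s))

lemma exp_neg_div_two_le_measureReal_closePairs (hlam : ∀ i, 0 ≤ lam i) (hT : 0 ≤ T)
    {w : Fin n → ℝ}
    (hw : (stdGaussian n).real (Prod.mk w ⁻¹' atypicalPairs lam T s r t) < 1 / 2) :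
    rexp (-t) / 2 ≤
      (stdGaussian n).real (Prod.mk w ⁻¹' closePairs (diagonal lam) √s r) := by
  have half_le_typical : 1 / 2 ≤
      (stdGaussian n).real (Prod.mk w ⁻¹' atypicalPairs lam T s r t)ᶜ := by
    rw [probReal_compl_eq_one_sub (measurable_prodMk_left (measurableSet_atypicalPairs ..))]
    linarith
  have typical_subset : (Prod.mk w ⁻¹' atypicalPairs lam T s r t)ᶜ ⊆
      {x | testChannel lam T s w x ∈ Prod.mk w ⁻¹' closePairs (diagonal lam) √s r ∧
        informationDensity lam T s w x ≤ t} := fun x hx => by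
    simp only [atypicalPairs, Set.mem_compl_iff, Set.mem_preimage, Set.mem_union,
      Set.mem_ofPred_eq, not_or, not_le] at hx
    exact ⟨hx.1.le, hx.2.le⟩
  calc rexp (-t) / 2 = rexp (-t) * (1 / 2) := by ring
    _ ≤ rexp (-t) * (stdGaussian n).real
          {x | testChannel lam T s w x ∈ Prod.mk w ⁻¹' closePairs (diagonal lam) √s r ∧
            informationDensity lam T s w x ≤ t} := by
        gcongr
        exact half_le_typical.trans (measureReal_mono typical_subset)
    _ ≤ _ := exp_neg_mul_measureReal_affine_le (fun i => wienerGain (lam i) T / √s * w i)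
        (fun i => Real.sqrt_pos.2 (sub_pos.2 (wienerGain_lt_one (hlam i) hT)))
        (measurable_prodMk_left (measurableSet_closePairs ..)) t

lemma measureReal_atypicalPairs_le (hn : 0 < n) (hlam : ∀ i, 0 ≤ lam i)
    (hsum : ∑ i, lam i = n) (hT : 0 < T) (hs : 0 < s) (hs1 : s ≤ 1)
    (hσ : s ∈ Set.Icc (matchedVariance lam T) (matchedVariance lam T + ε)) (hbT : 2 / T ≤ b)
    (hbs : s⁻¹ ≤ b) (hκ : 0 < κ) :
    ((stdGaussian n).prod (stdGaussian n)).real (atypicalPairs lam T s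
      (n * (Drc lam T + ε + κ)) (n * (Rrc lam T * Real.log 2 + κ))) ≤
      18 * b ^ 2 * gaussianFourthMoment / (n * κ ^ 2) := by
  have distortion_le := measureReal_distortion_ge_le hn hlam hsum hT hs hs1
    (by linarith [hσ.1, hσ.2]) hσ.2 hbT hκ
  have information_le := measureReal_informationDensity_ge_le hn hlam hT.le hs hs1 hσ.1 hbs hκ
  refine (measureReal_union_le _ _).trans ((add_le_add distortion_le information_le).trans_eq ?_)
  ring

lemma exists_gridVariance_measureReal_lt_le (hn : 0 < n) (hlam : ∀ i, 0 ≤ lam i)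
    (hsum : ∑ i, lam i = n) {R : ℝ} (hR : 0 < R) {K : ℕ} (hK : 0 < K) (hκ : 0 < κ) :
    ∃ k : Fin K, (stdGaussian n).real {w | (stdGaussian n).real (Prod.mk w ⁻¹'
      closePairs (diagonal lam) √(gridVariance K k) (n * (DDrc lam R + 1 / K + κ))) <
        rexp (-(n * (R * Real.log 2 + κ))) / 2} ≤
      36 * (K + (R * Real.log 2)⁻¹) ^ 2 * gaussianFourthMoment / (n * κ ^ 2) := by
  have hT := Trc_pos hn hlam hsum hR
  have hRT := Rrc_Trc hn hlam hsum hR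
  have nats_pos : 0 < R * Real.log 2 := mul_pos hR (Real.log_pos one_lt_two)
  have le_T := two_mul_Rrc_mul_log_two_le hn hlam hsum hT.le
  obtain ⟨k, hk⟩ := exists_gridVariance_mem_Icc hK (matchedVariance_mem_Icc hlam hT.le)
  set s := gridVariance K k
  have hK' : (0 : ℝ) < K := Nat.cast_pos.2 hK
  have inv_le_s : (K : ℝ)⁻¹ ≤ s := inv_le_gridVariance k
  have atypical_le := measureReal_atypicalPairs_le (b := K + (R * Real.log 2)⁻¹) hn hlam hsum hT
    ((inv_pos.2 hK').trans_le inv_le_s) (gridVariance_le_one k) hk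
    (by
      rw [hRT] at le_T
      refine le_trans ?_ (le_add_of_nonneg_left hK'.le)
      rw [inv_eq_one_div, div_le_div_iff₀ hT nats_pos]
      linarith)
    ((inv_le_of_inv_le₀ hK' inv_le_s).trans (le_add_of_nonneg_right (inv_pos.2 nats_pos).le)) hκ
  rw [hRT] at atypical_le
  refine ⟨k, ?_⟩
  calc (stdGaussian n).real {w | _ < _}
      ≤ (stdGaussian n).real {w | 1 / 2 ≤ (stdGaussian n).real (Prod.mk w ⁻¹'
          atypicalPairs lam (Trc lam R) s (n * (DDrc lam R + 1 / K + κ))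
            (n * (R * Real.log 2 + κ)))} := by
        refine measureReal_mono fun w hw => ?_
        contrapose! hw
        simpa using exp_neg_div_two_le_measureReal_closePairs hlam hT.le (by simpa using hw)
    _ ≤ _ := (measureReal_le_section_le (measurableSet_atypicalPairs ..) one_half_pos).trans
        ((div_le_div_of_nonneg_right atypical_le one_half_pos.le).trans_eq (by ring))

end Typicality

section Diagonalization

variable {n : ℕ} {U : Matrix (Fin n) (Fin n) ℝ} {lam : Fin n → ℝ}

lemma dSig_conj (U Sig : Matrix (Fin n) (Fin n) ℝ) (w v : Fin n → ℝ) :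
    dSig (U * Sig * Uᵀ) w v = dSig Sig (Uᵀ *ᵥ w) (Uᵀ *ᵥ v) := by
  simp only [dSig, ← mulVec_sub, ← mulVec_mulVec]
  rw [dotProduct_mulVec, ← mulVec_transpose]

lemma nonneg_of_posSemidef_conj_diagonal (hU : U * Uᵀ = 1)
    (h : (U * diagonal lam * Uᵀ).PosSemidef) (i : Fin n) : 0 ≤ lam i := by
  have hU' : Uᵀ * U = 1 := mul_eq_one_comm.1 hU
  have conj_eq : Uᴴ * (U * diagonal lam * Uᵀ) * U = diagonal lam := by
    rw [conjTranspose_eq_transpose_of_trivial, Matrix.mul_assoc, Matrix.mul_assoc, hU',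
      Matrix.mul_one, ← Matrix.mul_assoc, hU', Matrix.one_mul]
  exact posSemidef_diagonal_iff.1 (conj_eq ▸ h.conjTranspose_mul_mul_same U) i

lemma trace_conj_diagonal (hU : U * Uᵀ = 1) (lam : Fin n → ℝ) :
    (U * diagonal lam * Uᵀ).trace = ∑ i, lam i := by
  rw [trace_mul_comm, ← Matrix.mul_assoc, mul_eq_one_comm.1 hU, Matrix.one_mul, trace_diagonal]

lemma measurePreserving_transpose_mulVec_stdGaussian (hU : U * Uᵀ = 1) :
    MeasurePreserving (fun w => Uᵀ *ᵥ w) (stdGaussian n) (stdGaussian n) :=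
  measurePreserving_mulVec_stdGaussian (by rwa [transpose_transpose])

lemma measureReal_lt_closePairs_conj (hU : U * Uᵀ = 1) (Sig : Matrix (Fin n) (Fin n) ℝ)
    (c r q : ℝ) :
    (stdGaussian n).real {w |
        (stdGaussian n).real (Prod.mk w ⁻¹' closePairs (U * Sig * Uᵀ) c r) < q} =
      (stdGaussian n).real {w | (stdGaussian n).real (Prod.mk w ⁻¹' closePairs Sig c r) < q} := by
  have rotation := measurePreserving_transpose_mulVec_stdGaussian hU
  have section_eq : ∀ w : Fin n → ℝ,
      (stdGaussian n).real (Prod.mk w ⁻¹' closePairs (U * Sig * Uᵀ) c r) =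
        (stdGaussian n).real (Prod.mk (Uᵀ *ᵥ w) ⁻¹' closePairs Sig c r) := fun w => by
    rw [← rotation.measureReal_preimage
      (measurable_prodMk_left (measurableSet_closePairs Sig c r)).nullMeasurableSet]
    simp only [closePairs, Set.preimage_ofPred_eq, dSig_conj, mulVec_smul]
  simp only [section_eq]
  exact rotation.measureReal_preimage (measurableSet_lt (measurable_measureReal_prodMk_left
    (measurableSet_closePairs Sig c r)) measurable_const).nullMeasurableSet

lemma dSig_conj_diagonal_nonneg (U : Matrix (Fin n) (Fin n) ℝ) (hlam : ∀ i, 0 ≤ lam i)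
    (w v : Fin n → ℝ) : 0 ≤ dSig (U * diagonal lam * Uᵀ) w v := by
  rw [dSig_conj, dSig_diagonal]
  exact Finset.sum_nonneg fun i _ => mul_nonneg (hlam i) (sq_nonneg _)

lemma memLp_eval_sq_stdGaussian (i : Fin n) : MemLp (fun w => w i ^ 2) 2 (stdGaussian n) := by
  have memLp_eval : MemLp (fun w : Fin n → ℝ => w i) 4 (stdGaussian n) :=
    (memLp_id_gaussianReal' 4 (by simp)).comp_measurePreserving (measurePreserving_eval _ i)
  simpa only [sq] using memLp_mul_of_memLp_four memLp_eval memLp_eval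

lemma integral_eval_pow_four_stdGaussian (i : Fin n) :
    ∫ w, w i ^ 4 ∂stdGaussian n = gaussianFourthMoment :=
  integral_comp_eval (μ := fun _ => gaussianReal 0 1) (f := fun x : ℝ => x ^ 4)
    (continuous_pow 4).aestronglyMeasurable

lemma memLp_dSig_conj_diagonal_zero (hU : U * Uᵀ = 1) (lam : Fin n → ℝ) :
    MemLp (fun w => dSig (U * diagonal lam * Uᵀ) w 0) 2 (stdGaussian n) := by
  have memLp_diagonal : MemLp (fun w => dSig (diagonal lam) w 0) 2 (stdGaussian n) := by
    simp only [dSig_diagonal, Pi.zero_apply, sub_zero]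
    exact memLp_finsetSum _ fun i _ => (memLp_eval_sq_stdGaussian i).const_mul (lam i)
  simpa only [dSig_conj, mulVec_zero, Function.comp_def] using
    memLp_diagonal.comp_measurePreserving (measurePreserving_transpose_mulVec_stdGaussian hU)

lemma integral_dSig_diagonal_zero_sq_le (hn : 0 < n) (hlam : ∀ i, 0 ≤ lam i)
    (hsum : ∑ i, lam i = n) :
    ∫ w, (1 / (n : ℝ) * dSig (diagonal lam) w 0) ^ 2 ∂stdGaussian n ≤ gaussianFourthMoment := by
  have hn' : (0 : ℝ) < n := Nat.cast_pos.2 hn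
  have sum_weights : ∑ i, lam i / n = 1 := by rw [← Finset.sum_div, hsum, div_self hn'.ne']
  have integrable_pow_four : ∀ i, Integrable (fun w : Fin n → ℝ => lam i / n * w i ^ 4)
      (stdGaussian n) := fun i => by
    simpa only [← pow_mul] using (memLp_eval_sq_stdGaussian i).integrable_sq.const_mul (lam i / n)
  have jensen : ∀ w : Fin n → ℝ,
      (1 / (n : ℝ) * dSig (diagonal lam) w 0) ^ 2 ≤ ∑ i, lam i / n * w i ^ 4 := fun w => by
    have := Real.pow_arith_mean_le_arith_mean_pow Finset.univ (fun i => lam i / n)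
      (fun i => w i ^ 2) (fun i _ => div_nonneg (hlam i) hn'.le) sum_weights
      (fun i _ => sq_nonneg _) 2
    simp only [← pow_mul] at this
    rw [dSig_diagonal, Finset.mul_sum]
    simpa [div_mul_eq_mul_div, inv_mul_eq_div] using this
  calc ∫ w, (1 / (n : ℝ) * dSig (diagonal lam) w 0) ^ 2 ∂stdGaussian n
      ≤ ∫ w, ∑ i, lam i / n * w i ^ 4 ∂stdGaussian n :=
        integral_mono_of_nonneg (.of_forall fun w => sq_nonneg _)
          (integrable_finsetSum _ fun i _ => integrable_pow_four i) (.of_forall jensen)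
    _ = gaussianFourthMoment := by
        simp only [integral_finsetSum _ fun i _ => integrable_pow_four i, integral_const_mul,
          integral_eval_pow_four_stdGaussian, ← Finset.sum_mul, sum_weights, one_mul]

lemma integral_dSig_conj_diagonal_zero_sq_le (hn : 0 < n) (hU : U * Uᵀ = 1)
    (hlam : ∀ i, 0 ≤ lam i) (hsum : ∑ i, lam i = n) :
    ∫ w, (1 / (n : ℝ) * dSig (U * diagonal lam * Uᵀ) w 0) ^ 2 ∂stdGaussian n ≤
      gaussianFourthMoment := by
  have rotation := measurePreserving_transpose_mulVec_stdGaussian hU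
  have continuous_sq :
      Continuous fun w : Fin n → ℝ => (1 / (n : ℝ) * dSig (diagonal lam) w 0) ^ 2 :=
    (((continuous_dSig _).comp (.prodMk_left 0)).const_mul _).pow 2
  have integral_rotated := integral_map (μ := stdGaussian n) rotation.measurable.aemeasurable
    continuous_sq.aestronglyMeasurable
  rw [rotation.map_eq] at integral_rotated
  simp only [dSig_conj, mulVec_zero, ← integral_rotated]
  exact integral_dSig_diagonal_zero_sq_le hn hlam hsum

end Diagonalization

section Code

variable {n K M : ℕ} {U : Matrix (Fin n) (Fin n) ℝ} {lam : Fin n → ℝ}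

lemma exists_encoder_decoder_forall_le {α β σ ι : Type*} [Fintype ι] [Nonempty ι] {N : ℕ}
    (hN : Fintype.card ι ≤ N) (d : α → β → ℝ) (C : σ → ι → β) :
    ∃ (f : α → σ → Fin N) (g : Fin N → σ → β), ∀ a s i, d a (g (f a s) s) ≤ d a (C s i) := by
  obtain ⟨e⟩ := Function.Embedding.nonempty_of_card_le (hN.trans_eq (Fintype.card_fin N).symm)
  choose best h_best using fun a s => Finite.exists_min fun i => d a (C s i)
  refine ⟨fun a s => e (best a s), fun j s => C s (Function.invFun e j), fun a s i => ?_⟩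
  simpa only [Function.leftInverse_invFun e.injective (best a s)] using h_best a s i

/-- The codewords built from the Gaussian vectors `Z`: the zero word, and every `Z l` scaled to
each variance of the grid. -/
noncomputable def codeword (K : ℕ) (Z : Fin M → Fin n → ℝ) : Option (Fin K × Fin M) → Fin n → ℝ
  | none => 0
  | some (k, l) => √(gridVariance K k) • Z l

lemma integral_dSig_le_of_le_codeword (hn : 0 < n) (hU : U * Uᵀ = 1) (hlam : ∀ i, 0 ≤ lam i)
    (hsum : ∑ i, lam i = n) {D : ℝ} (hD : 0 ≤ D) {Z : Fin M → Fin n → ℝ}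
    {V : (Fin n → ℝ) → Fin n → ℝ} (hV : ∀ w o,
      dSig (U * diagonal lam * Uᵀ) w (V w) ≤ dSig (U * diagonal lam * Uᵀ) w (codeword K Z o))
    (k : Fin K) :
    ∫ w, 1 / (n : ℝ) * dSig (U * diagonal lam * Uᵀ) w (V w) ∂stdGaussian n ≤
      D + √(gaussianFourthMoment * (stdGaussian n).real
        (uncovered (closePairs (U * diagonal lam * Uᵀ) √(gridVariance K k) (n * D)) Z)) := by
  have hn' : (0 : ℝ) < n := Nat.cast_pos.2 hn
  have le_of_covered : ∀ w ∉ uncovered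
      (closePairs (U * diagonal lam * Uᵀ) √(gridVariance K k) (n * D)) Z,
      1 / (n : ℝ) * dSig (U * diagonal lam * Uᵀ) w (V w) ≤ D := fun w hw => by
    obtain ⟨l, hl⟩ : ∃ l, dSig (U * diagonal lam * Uᵀ) w (√(gridVariance K k) • Z l) ≤ n * D := by
      simpa [uncovered, closePairs] using hw
    rw [one_div, inv_mul_le_iff₀ hn']
    exact (hV w (some (k, l))).trans hl
  refine (integral_le_add_sqrt_of_le_off (measurableSet_uncovered (measurableSet_closePairs ..) Z)
    ((memLp_dSig_conj_diagonal_zero hU lam).const_mul (1 / (n : ℝ)))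
    (fun w => mul_nonneg (by positivity) (dSig_conj_diagonal_nonneg U hlam _ _)) hD le_of_covered
    fun w => mul_le_mul_of_nonneg_left (hV w none) (by positivity)).trans ?_
  gcongr
  exact integral_dSig_conj_diagonal_zero_sq_le hn hU hlam hsum

lemma exists_code (hn : 0 < n) {N : ℕ} (hN : K * M + 1 ≤ N) :
    ∃ (f : (Fin n → ℝ) → Matrix (Fin n) (Fin n) ℝ → ℝ → Fin N) (g : Fin N → ℝ → Fin n → ℝ),
      ∀ (U : Matrix (Fin n) (Fin n) ℝ) (lam : Fin n → ℝ), U * Uᵀ = 1 → (∀ i, 0 ≤ lam i) →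
      ∑ i, lam i = n → ∀ (D q δ : ℝ) (k : Fin K), 0 ≤ D → 0 < δ →
      (stdGaussian n).real {w | (stdGaussian n).real (Prod.mk w ⁻¹'
        closePairs (diagonal lam) √(gridVariance K k) (n * D)) < q} ≤ δ →
      1 - rexp (-(q * M)) / δ ≤ (volume.restrict (Set.Icc (0 : ℝ) 1)).real
        {s | ∫ w, 1 / (n : ℝ) * dSig (U * diagonal lam * Uᵀ) w
          (g (f w (U * diagonal lam * Uᵀ) s) s) ∂stdGaussian n ≤
            D + √(gaussianFourthMoment * (2 * δ))} := by
  obtain ⟨Z, hZ, hZ_law⟩ :=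
    exists_measurable_map_restrict_Icc_eq (Measure.pi fun _ : Fin M => stdGaussian n)
  obtain ⟨f, g, hfg⟩ := exists_encoder_decoder_forall_le (N := N) (by simpa using hN)
    (fun a : (Fin n → ℝ) × Matrix (Fin n) (Fin n) ℝ => dSig a.2 a.1) fun s => codeword K (Z s)
  refine ⟨fun w Sig s => f (w, Sig) s, g, fun U lam hU hlam hsum D q δ k hD hδ hq => ?_⟩
  rw [← measureReal_lt_closePairs_conj hU] at hq
  have : IsProbabilityMeasure (volume.restrict (Set.Icc (0 : ℝ) 1)) := ⟨by simp⟩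
  have covered := one_sub_le_measureReal_uncovered_lt ⟨hZ, hZ_law⟩
    (measurableSet_closePairs ..) hδ hq
  rw [Fintype.card_fin] at covered
  refine covered.trans (measureReal_mono fun s hs => ?_)
  refine (integral_dSig_le_of_le_codeword hn hU hlam hsum hD
    (fun w o => hfg (w, U * diagonal lam * Uᵀ) s o) k).trans ?_
  have := gaussianFourthMoment_nonneg
  gcongr
  exact hs.out.le

end Code

section Asymptotics

open Filter Topology

variable {c κ δ : ℝ}

lemma eventually_mul_ceil_exp_add_one_le_floor_two_rpow {r : ℝ} (hc : 0 ≤ c)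
    (hr : c < r * Real.log 2) (K : ℕ) :
    ∀ᶠ n : ℕ in atTop, K * ⌈rexp (n * c)⌉₊ + 1 ≤ ⌊(2 : ℝ) ^ ((n : ℝ) * r)⌋₊ := by
  have tendsto_exp : Tendsto (fun n : ℕ => rexp (n * (r * Real.log 2 - c))) atTop atTop :=
    tendsto_exp_atTop.comp (tendsto_natCast_atTop_atTop.atTop_mul_const (sub_pos.2 hr))
  filter_upwards [tendsto_exp.eventually_ge_atTop (2 * K + 1)] with n hn
  have one_le : 1 ≤ rexp (n * c) := one_le_exp (by positivity)
  have ceil_le : (⌈rexp (n * c)⌉₊ : ℝ) ≤ 2 * rexp (n * c) := by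
    linarith [Nat.ceil_lt_add_one (exp_pos (n * c)).le]
  refine Nat.le_floor ?_
  push_cast
  calc K * (⌈rexp (n * c)⌉₊ : ℝ) + 1 ≤ K * (2 * rexp (n * c)) + rexp (n * c) := by gcongr
    _ = rexp (n * c) * (2 * K + 1) := by ring
    _ ≤ rexp (n * c) * rexp (n * (r * Real.log 2 - c)) := by gcongr
    _ = 2 ^ ((n : ℝ) * r) := by
        rw [← Real.exp_add, Real.rpow_def_of_pos two_pos]
        ring_nf

lemma eventually_exp_neg_mul_ceil_exp_div_le (hκ : 0 < κ) (hδ : 0 < δ) (c B : ℝ) :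
    ∀ᶠ n : ℕ in atTop,
      rexp (-(rexp (-(n * c)) / 2 * ⌈rexp (n * (c + κ))⌉₊)) / δ ≤ rexp (-(n : ℝ) ^ B) := by
  have tendsto_exp : Tendsto (fun n : ℕ => rexp (κ * n)) atTop atTop :=
    tendsto_exp_atTop.comp (tendsto_natCast_atTop_atTop.const_mul_atTop hκ)
  filter_upwards [tendsto_exp.eventually_ge_atTop (4 * -Real.log δ), eventually_gt_atTop 0,
    ((tendsto_exp_mul_div_rpow_atTop B κ hκ).comp
      tendsto_natCast_atTop_atTop).eventually_ge_atTop 4] with n log_le hn rpow_le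
  rw [Function.comp_apply, le_div_iff₀ (rpow_pos_of_pos (Nat.cast_pos.2 hn) B)] at rpow_le
  have exponent_ge : rexp (κ * n) / 2 ≤ rexp (-(n * c)) / 2 * ⌈rexp (n * (c + κ))⌉₊ := by
    calc rexp (κ * n) / 2 = rexp (-(n * c)) / 2 * rexp (n * (c + κ)) := by
          rw [div_mul_eq_mul_div, ← Real.exp_add]; ring_nf
      _ ≤ _ := by gcongr; exact Nat.le_ceil _
  rw [div_le_iff₀ hδ]
  calc rexp (-(rexp (-(n * c)) / 2 * ⌈rexp (n * (c + κ))⌉₊))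
      ≤ rexp (-(n : ℝ) ^ B + Real.log δ) := exp_le_exp.2 (by linarith)
    _ = rexp (-(n : ℝ) ^ B) * δ := by rw [Real.exp_add, Real.exp_log hδ]

lemma exists_pos_sqrt_mul_le (m : ℝ) {x : ℝ} (hx : 0 < x) : ∃ δ, 0 < δ ∧ √(m * (2 * δ)) ≤ x := by
  have tendsto_sqrt : Tendsto (fun δ => √(m * (2 * δ))) (𝓝[>] 0) (𝓝 0) :=
    tendsto_nhdsWithin_of_tendsto_nhds
      ((by fun_prop : Continuous fun δ => √(m * (2 * δ))).tendsto' 0 0 (by simp))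
  obtain ⟨δ, hδ, δ_pos⟩ :=
    ((tendsto_sqrt.eventually_le_const hx).and self_mem_nhdsWithin).exists
  exact ⟨δ, δ_pos, hδ⟩

lemma eventually_div_natCast_mul_le (C : ℝ) {a : ℝ} (ha : 0 < a) (hδ : 0 < δ) :
    ∀ᶠ n : ℕ in atTop, C / (n * a) ≤ δ :=
  (((tendsto_natCast_atTop_atTop.atTop_mul_const ha).const_div_atTop C).eventually_lt_const
    hδ).mono fun _ => le_of_lt

end Asymptotics

end

/-- achievability of the random-coding rate-distortion tradeoff for a
Gaussian input, for each fixed PSD `Σ` of trace `n`, with probability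
`≥ 1 - exp(-n^B)` over the shared randomness `S`. -/
theorem stmt_5 (Rstar ε η B : ℝ) (hRstar : 0 < Rstar) (hε : 0 < ε) (hη : 0 < η) (hB : 0 < B) :
    ∃ n₀ : ℕ, ∀ n : ℕ, n₀ ≤ n →
      ∃ (R : ℝ) (f : (Fin n → ℝ) → Matrix (Fin n) (Fin n) ℝ → ℝ →
            Fin ⌊(2 : ℝ) ^ ((n : ℝ) * R)⌋₊)
        (g : Fin ⌊(2 : ℝ) ^ ((n : ℝ) * R)⌋₊ → ℝ → (Fin n → ℝ)),
        R ≤ Rstar + ε ∧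
        ∀ (Sig : Matrix (Fin n) (Fin n) ℝ), Sig.PosSemidef → Sig.trace = (n : ℝ) →
        ∀ (U : Matrix (Fin n) (Fin n) ℝ), U * Uᵀ = 1 →
        ∀ lam : Fin n → ℝ, Sig = U * Matrix.diagonal lam * Uᵀ →
          1 - Real.exp (-(n : ℝ) ^ B) ≤
            ((volume.restrict (Set.Icc (0 : ℝ) 1))
              {s : ℝ |
                (∫ w, (1 / (n : ℝ)) * dSig Sig w (g (f w Sig s) s) ∂(stdGaussian n))
                  ≤ DDrc lam Rstar + η}).toReal := by
  obtain ⟨δ, hδ, sqrt_le⟩ := exists_pos_sqrt_mul_le gaussianFourthMoment (half_pos hη)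
  obtain ⟨K, hK⟩ := exists_nat_one_div_lt (show 0 < η / 4 by positivity)
  obtain ⟨κ, hκ, κ_lt⟩ := exists_between (show 0 < min (ε * Real.log 2 / 2) (η / 4) by positivity)
  obtain ⟨κ_lt_rate, κ_lt_distortion⟩ := lt_min_iff.1 κ_lt
  obtain ⟨n₀, hn₀⟩ := Filter.eventually_atTop.1 ((Filter.eventually_gt_atTop 0).and
    ((eventually_mul_ceil_exp_add_one_le_floor_two_rpow (r := Rstar + ε)
      (by positivity : 0 ≤ Rstar * Real.log 2 + κ + κ) (by linarith) (K + 1)).and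
    ((eventually_exp_neg_mul_ceil_exp_div_le hκ hδ (Rstar * Real.log 2 + κ) B).and
    (eventually_div_natCast_mul_le _ (pow_pos hκ 2) hδ))))
  refine ⟨n₀, fun n hn => ?_⟩
  obtain ⟨n_pos, size_le, failure_le, atypical_le⟩ := hn₀ n hn
  obtain ⟨f, g, hfg⟩ := exists_code n_pos size_le
  refine ⟨Rstar + ε, f, g, le_rfl, ?_⟩
  rintro Sig hSig htrace U hU lam rfl
  have hlam := nonneg_of_posSemidef_conj_diagonal hU hSig
  have hsum := (trace_conj_diagonal hU lam).symm.trans htrace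
  obtain ⟨k, hk⟩ := exists_gridVariance_measureReal_lt_le n_pos hlam hsum hRstar K.succ_pos hκ
  have D_nonneg : 0 ≤ DDrc lam Rstar := Drc_nonneg hlam (Trc_pos n_pos hlam hsum hRstar).le
  refine (sub_le_sub_left failure_le 1).trans ((hfg U lam hU hlam hsum _ _ δ k (by positivity) hδ
    (hk.trans atypical_le)).trans (measureReal_mono fun s hs => hs.out.trans ?_))
  push_cast
  linarith
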